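/- Let (Ω, 𝔪) be a measure space, and let (μ_k)_{k∈ℤ} be a family of measurable functions μ_k : Ω → ℝ with μ_k ≥ 0 a.e. for every k and Σ_{k∈ℤ} μ_k(x) = 1 for a.e. x ∈ Ω, such that Σ_{k∈ℤ} k² ∫_Ω μ_k d𝔪 < ∞ and the function D(x) := Σ_{k∈ℤ} k·μ_k(x) is defined a.e. (the series converging absolutely a.e.). Then ∫_Ω Φ(D(x)) d𝔪(x) ≤ Σ_{k∈ℤ} k² ∫_Ω μ_k d𝔪. -/

import Mathlib

/-!
`Φ` interpolates the square function linearly between consecutive integers: on `n ≤ |D| < n + 1` it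
is the secant line of the square through `n` and `n + 1`. No integer lies strictly between `n` and
`n + 1`, so each such secant stays below the square at *every* integer. Take `n = ⌊|D(x)|⌋`. The
secant is increasing and `|D(x)| ≤ ∑ |k| μ_k(x)`, so averaging over `k` with the weights `μ_k(x)`
gives `Φ(D(x)) ≤ ∑ k² μ_k(x)`; this is then integrated term by term. As the secant has a
nonpositive constant term, weights of total mass at most `1` suffice.
-/

open MeasureTheory

/-- The function `Φ(D) = (2k+1)|D| − k − k²` where `k = ⌊|D|⌋ ∈ ℕ`. -/
noncomputable def Phi (D : ℝ) : ℝ :=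
  (2 * (⌊|D|⌋₊ : ℝ) + 1) * |D| - (⌊|D|⌋₊ : ℝ) - (⌊|D|⌋₊ : ℝ) ^ 2

/-- The secant line of `t ↦ t²` through the points of abscissa `x` and `x + 1`. The function `Phi`
follows these lines for natural `x`; `x` is real here so that no casts enter the algebra. -/
def sqSecant (x t : ℝ) : ℝ :=
  (2 * x + 1) * t - x - x ^ 2

namespace sqSecant

lemma eq_sq_sub (x t : ℝ) : sqSecant x t = t ^ 2 - (t - x) * (t - (x + 1)) := by
  unfold sqSecant
  ring

protected lemma monotone {x : ℝ} (hx : 0 ≤ x) : Monotone (sqSecant x) := by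
  intro s t hst
  unfold sqSecant
  gcongr

lemma sq_le {x t : ℝ} (hxt : x ≤ t) (htx : t ≤ x + 1) : t ^ 2 ≤ sqSecant x t := by
  rw [eq_sq_sub]
  linarith [mul_nonneg (sub_nonneg.2 hxt) (sub_nonneg.2 htx)]

lemma intCast_le_sq (n j : ℤ) : sqSecant n j ≤ (j : ℝ) ^ 2 := by
  have consecutive : 0 ≤ (j - n) * (j - (n + 1)) := by
    linarith [Int.le_self_sq (j - n)]
  rw [eq_sq_sub, sub_le_self_iff]
  exact_mod_cast consecutive

variable {ι : Type*} {x : ℝ} {t p : ι → ℝ}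

lemma hasSum_mul (hp : Summable p) (htp : Summable fun i => t i * p i) :
    HasSum (fun i => sqSecant x (t i) * p i)
      ((2 * x + 1) * ∑' i, t i * p i - (x + x ^ 2) * ∑' i, p i) := by
  have hterm (i : ι) : sqSecant x (t i) * p i = (2 * x + 1) * (t i * p i) - (x + x ^ 2) * p i := by
    unfold sqSecant
    ring
  simp only [hterm]
  exact (htp.hasSum.mul_left (2 * x + 1)).sub (hp.hasSum.mul_left (x + x ^ 2))

lemma tsum_le_tsum (hx : 0 ≤ x) (hp : Summable p) (hp_one : ∑' i, p i ≤ 1)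
    (htp : Summable fun i => t i * p i) :
    sqSecant x (∑' i, t i * p i) ≤ ∑' i, sqSecant x (t i) * p i := by
  have hmass : (x + x ^ 2) * ∑' i, p i ≤ x + x ^ 2 := mul_le_of_le_one_right (by positivity) hp_one
  rw [(hasSum_mul hp htp).tsum_eq, sqSecant]
  linarith

end sqSecant

section Phi

lemma Phi_eq_sqSecant (D : ℝ) : Phi D = sqSecant ⌊|D|⌋₊ |D| := rfl

lemma sq_le_Phi (D : ℝ) : D ^ 2 ≤ Phi D := by
  rw [Phi_eq_sqSecant, ← sq_abs]
  exact sqSecant.sq_le (Nat.floor_le (abs_nonneg D)) (Nat.lt_floor_add_one |D|).le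

lemma Phi_nonneg (D : ℝ) : 0 ≤ Phi D :=
  (sq_nonneg D).trans (sq_le_Phi D)

lemma measurable_Phi : Measurable Phi := by
  unfold Phi
  fun_prop

variable {ι : Type*} {a : ι → ℤ} {p : ι → ℝ}

lemma summable_abs_mul_of_summable_sq_mul (hp : ∀ i, 0 ≤ p i)
    (hsq : Summable fun i => (a i : ℝ) ^ 2 * p i) : Summable fun i => |(a i : ℝ)| * p i := by
  refine hsq.of_nonneg_of_le (fun i => mul_nonneg (abs_nonneg _) (hp i)) fun i => ?_
  have habs : |(a i : ℝ)| ≤ (a i : ℝ) ^ 2 := by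
    rw [← sq_abs]
    exact_mod_cast Int.le_self_sq |a i|
  exact mul_le_mul_of_nonneg_right habs (hp i)

lemma sqSecant_tsum_abs_mul_le_tsum_sq_mul (n : ℕ) (hp : ∀ i, 0 ≤ p i) (hp_sum : Summable p)
    (hp_one : ∑' i, p i ≤ 1) (hsq : Summable fun i => (a i : ℝ) ^ 2 * p i) :
    sqSecant n (∑' i, |(a i : ℝ)| * p i) ≤ ∑' i, (a i : ℝ) ^ 2 * p i := by
  have habs := summable_abs_mul_of_summable_sq_mul hp hsq
  have hsecant (i : ι) : sqSecant n |(a i : ℝ)| ≤ (a i : ℝ) ^ 2 := by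
    rw [← sq_abs]
    exact_mod_cast sqSecant.intCast_le_sq n |a i|
  calc sqSecant n (∑' i, |(a i : ℝ)| * p i)
      ≤ ∑' i, sqSecant n |(a i : ℝ)| * p i :=
        sqSecant.tsum_le_tsum n.cast_nonneg hp_sum hp_one habs
    _ ≤ ∑' i, (a i : ℝ) ^ 2 * p i :=
        (sqSecant.hasSum_mul hp_sum habs).summable.tsum_le_tsum
          (fun i => mul_le_mul_of_nonneg_right (hsecant i) (hp i)) hsq

lemma Phi_tsum_mul_le_tsum_sq_mul (hp : ∀ i, 0 ≤ p i) (hp_sum : Summable p)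
    (hp_one : ∑' i, p i ≤ 1) (hsq : Summable fun i => (a i : ℝ) ^ 2 * p i) :
    Phi (∑' i, (a i : ℝ) * p i) ≤ ∑' i, (a i : ℝ) ^ 2 * p i := by
  have hnorm (i : ι) : ‖(a i : ℝ) * p i‖ = |(a i : ℝ)| * p i := by
    rw [Real.norm_eq_abs, abs_mul, abs_of_nonneg (hp i)]
  have hmean : |∑' i, (a i : ℝ) * p i| ≤ ∑' i, |(a i : ℝ)| * p i :=
    tsum_of_norm_bounded (summable_abs_mul_of_summable_sq_mul hp hsq).hasSum fun i => (hnorm i).le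
  exact (sqSecant.monotone (Nat.cast_nonneg _) hmean).trans
    (sqSecant_tsum_abs_mul_le_tsum_sq_mul _ hp hp_sum hp_one hsq)

end Phi

section Integral

variable {Ω : Type*} [MeasurableSpace Ω] {m : Measure Ω} {c : ℝ} {f : Ω → ℝ}

lemma integrable_const_mul_of_ne_zero (hf : c ≠ 0 → Integrable f m) :
    Integrable (fun x => c * f x) m := by
  obtain rfl | hc := eq_or_ne c 0
  · simp
  · exact (hf hc).const_mul c

lemma integral_norm_const_mul_of_nonneg (hc : 0 ≤ c) (hf : 0 ≤ᵐ[m] f) :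
    ∫ x, ‖c * f x‖ ∂m = c * ∫ x, f x ∂m := by
  rw [← integral_const_mul]
  exact integral_congr_ae <| hf.mono fun x hx => Real.norm_of_nonneg (mul_nonneg hc hx)

end Integral

section Tonelli

variable {Ω ι E : Type*} [MeasurableSpace Ω] {m : Measure Ω} [Countable ι] [NormedAddCommGroup E]
  {f : ι → Ω → E}

lemma lintegral_tsum_enorm_ne_top (hf : ∀ i, Integrable (f i) m)
    (hsum : Summable fun i => ∫ x, ‖f i x‖ ∂m) : ∫⁻ x, ∑' i, ‖f i x‖ₑ ∂m ≠ ⊤ := by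
  rw [lintegral_tsum fun i => (hf i).aestronglyMeasurable.enorm]
  simp only [← ofReal_integral_norm_eq_lintegral_enorm (hf _)]
  exact hsum.tsum_ofReal_ne_top

lemma ae_summable_norm_of_summable_integral_norm (hf : ∀ i, Integrable (f i) m)
    (hsum : Summable fun i => ∫ x, ‖f i x‖ ∂m) : ∀ᵐ x ∂m, Summable fun i => ‖f i x‖ := by
  filter_upwards [ae_lt_top' (AEMeasurable.tsum fun i => (hf i).aestronglyMeasurable.enorm)
    (lintegral_tsum_enorm_ne_top hf hsum)] with x hx
  simpa only [toReal_enorm] using ENNReal.summable_toReal hx.ne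

lemma integrable_tsum_of_summable_integral_norm [CompleteSpace E] (hf : ∀ i, Integrable (f i) m)
    (hsum : Summable fun i => ∫ x, ‖f i x‖ ∂m) : Integrable (fun x => ∑' i, f i x) m := by
  refine ⟨?_, ?_⟩
  · refine aestronglyMeasurable_of_tendsto_ae Filter.atTop
      (fun s => Finset.aestronglyMeasurable_fun_sum s fun i _ => (hf i).aestronglyMeasurable) ?_
    exact (ae_summable_norm_of_summable_integral_norm hf hsum).mono fun x hx => hx.of_norm.hasSum
  · calc ∫⁻ x, ‖∑' i, f i x‖ₑ ∂m ≤ ∫⁻ x, ∑' i, ‖f i x‖ₑ ∂m :=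
          lintegral_mono fun x => enorm_tsum_le_tsum_enorm
      _ < ⊤ := (lintegral_tsum_enorm_ne_top hf hsum).lt_top

end Tonelli

-- If `∫ μ 0 = ∞`, Lean's integral is `0`, and the term `k = 0` still has its usual value
-- `0 · ∞ = 0`; so `m` may be infinite.
theorem Phi_of_vorticity_le_second_moment_general {Ω : Type*} [MeasurableSpace Ω] (m : Measure Ω)
    (μ : ℤ → Ω → ℝ) (hint : ∀ k ≠ 0, Integrable (μ k) m) (hpos : ∀ k, 0 ≤ᵐ[m] μ k)
    (hpart : ∀ᵐ x ∂m, Summable (fun k : ℤ => μ k x) ∧ ∑' k : ℤ, μ k x ≤ 1)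
    (hbd : Summable (fun k : ℤ => (k : ℝ) ^ 2 * ∫ x, μ k x ∂m)) :
    Integrable (fun x => Phi (∑' k : ℤ, (k : ℝ) * μ k x)) m ∧
      ∫ x, Phi (∑' k : ℤ, (k : ℝ) * μ k x) ∂m ≤ ∑' k : ℤ, (k : ℝ) ^ 2 * ∫ x, μ k x ∂m := by
  have hsq (k : ℤ) : Integrable (fun x => (k : ℝ) ^ 2 * μ k x) m :=
    integrable_const_mul_of_ne_zero fun hk => hint k (by simpa using hk)
  have hsum : Summable fun k : ℤ => ∫ x, ‖(k : ℝ) ^ 2 * μ k x‖ ∂m := by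
    simpa only [integral_norm_const_mul_of_nonneg (sq_nonneg _) (hpos _)] using hbd
  have hmoment := integrable_tsum_of_summable_integral_norm hsq hsum
  have hle : ∀ᵐ x ∂m, Phi (∑' k : ℤ, (k : ℝ) * μ k x) ≤ ∑' k : ℤ, (k : ℝ) ^ 2 * μ k x := by
    filter_upwards [ae_all_iff.2 hpos, hpart,
      ae_summable_norm_of_summable_integral_norm hsq hsum] with x hx ⟨hx_sum, hx_one⟩ hx_sq
    exact Phi_tsum_mul_le_tsum_sq_mul hx hx_sum hx_one hx_sq.of_norm
  have hPhi : Integrable (fun x => Phi (∑' k : ℤ, (k : ℝ) * μ k x)) m := by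
    have hD : AEMeasurable (fun x => ∑' k : ℤ, (k : ℝ) * μ k x) m := .tsum fun k =>
      (integrable_const_mul_of_ne_zero fun hk => hint k (by simpa using hk)).aemeasurable
    refine hmoment.mono' (measurable_Phi.comp_aemeasurable hD).aestronglyMeasurable ?_
    exact hle.mono fun x hx => (Real.norm_of_nonneg (Phi_nonneg _)).trans_le hx
  refine ⟨hPhi, ?_⟩
  calc ∫ x, Phi (∑' k : ℤ, (k : ℝ) * μ k x) ∂m
      ≤ ∫ x, ∑' k : ℤ, (k : ℝ) ^ 2 * μ k x ∂m := integral_mono_ae hPhi hmoment hle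
    _ = ∑' k : ℤ, ∫ x, (k : ℝ) ^ 2 * μ k x ∂m :=
        (integral_tsum_of_summable_integral_norm hsq hsum).symm
    _ = ∑' k : ℤ, (k : ℝ) ^ 2 * ∫ x, μ k x ∂m := by simp only [integral_const_mul]

/-- If `(μ_k)_{k∈ℤ}` is an a.e. nonnegative measurable partition of unity
with finite total second moment `Σ_k k² ∫ μ_k < ∞`, and the vorticity
`D(x) = Σ_k k μ_k(x)` is defined a.e. (series converging absolutely a.e.), then
`∫ Φ(D(x)) dm ≤ Σ_k k² ∫ μ_k dm`. -/
theorem Phi_of_vorticity_le_second_moment {Ω : Type*} [MeasurableSpace Ω] (m : Measure Ω)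
    (μ : ℤ → Ω → ℝ) (hmeas : ∀ k, Measurable (μ k)) (hint : ∀ k, Integrable (μ k) m)
    (hpos : ∀ k, 0 ≤ᵐ[m] μ k)
    (hpart : ∀ᵐ x ∂m, Summable (fun k : ℤ => μ k x) ∧ ∑' k : ℤ, μ k x = 1)
    (hbd : Summable (fun k : ℤ => (k : ℝ) ^ 2 * ∫ x, μ k x ∂m))
    (hDsum : ∀ᵐ x ∂m, Summable (fun k : ℤ => (k : ℝ) * μ k x)) :
    ∫ x, Phi (∑' k : ℤ, (k : ℝ) * μ k x) ∂m ≤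
      ∑' k : ℤ, (k : ℝ) ^ 2 * ∫ x, μ k x ∂m :=
  (Phi_of_vorticity_le_second_moment_general m μ (fun k _ => hint k) hpos
    (hpart.mono fun _ hx => ⟨hx.1, hx.2.le⟩) hbd).2
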